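/- For any two distinct colours c, q ∈ Fin k with S(c,c) nonempty, if X is chosen uniformly at random from S(c,c), then H(X,q) is uniformly distributed over S(q,c). -/

import Mathlib

/-- The disagreement graph `Q_{σ(v),q}`: the set of vertices `x` for which there is a
path `v = w₀, …, w_t = x` in `G` all of whose vertices receive colour `σ v` or `q`. -/
def disagreeSet {V : Type*} {k : ℕ} (G : SimpleGraph V) (v : V)
    (σ : V → Fin k) (q : Fin k) : Set V :=
  {x | ∃ p : G.Walk v x, ∀ w ∈ p.support, σ w = σ v ∨ σ w = q}

open Classical in
/-- The `q`-switching `H(σ,q)`: exchange the colours `σ v` and `q` on the disagreement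
graph, leaving all other vertices unchanged. -/
noncomputable def switchColour {V : Type*} {k : ℕ} (G : SimpleGraph V) (v : V)
    (σ : V → Fin k) (q : Fin k) : V → Fin k := fun x =>
  if x ∈ disagreeSet G v σ q then
    if σ x = σ v then q else if σ x = q then σ v else σ x
  else σ x

/-- `S(c,c)` as a finset: the proper colourings with `σ v = c`, `σ u = c` whose
disagreement graph `Q_{c,q}` does not contain `u`. -/
noncomputable def SccF {V : Type*} [Fintype V] {k : ℕ} (G : SimpleGraph V) (v u : V)
    (c q : Fin k) : Finset (V → Fin k) :=
  (Set.toFinite {σ : V → Fin k |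
    (∀ x y, G.Adj x y → σ x ≠ σ y) ∧ σ v = c ∧ σ u = c ∧
      u ∉ disagreeSet G v σ q}).toFinset

/-- `S(q,c)` as a finset: the proper colourings with `σ v = q`, `σ u = c` whose
disagreement graph `Q_{q,c}` does not contain `u`. -/
noncomputable def SqcF {V : Type*} [Fintype V] {k : ℕ} (G : SimpleGraph V) (v u : V)
    (c q : Fin k) : Finset (V → Fin k) :=
  (Set.toFinite {σ : V → Fin k |
    (∀ x y, G.Adj x y → σ x ≠ σ y) ∧ σ v = q ∧ σ u = c ∧
      u ∉ disagreeSet G v σ c}).toFinset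

/-!
Membership in the disagreement graph of `v` depends only on which vertices carry a colour from
the pair `{σ v, q}`. Switching permutes the two colours of the pair, so it preserves the
disagreement graph and is undone by switching back to `σ v`. A neighbour outside the disagreement
graph of a vertex inside has neither colour, so switching preserves properness. Both `S(c,c)` and
`S(q,c)` fix the colour of a vertex `u` outside the disagreement graph, so switching is a bijection
between them, and bijections preserve uniform distributions.
-/

theorem map_uniformOfFinset_of_bijOn {α β : Type*} {f : α → β} {s : Finset α} {t : Finset β}
    (hf : Set.BijOn f s t) (hs : s.Nonempty) (ht : t.Nonempty) :
    (PMF.uniformOfFinset s hs).map f = PMF.uniformOfFinset t ht := by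
  classical
  obtain rfl : s.image f = t := by exact_mod_cast hf.image_eq
  refine PMF.toOuterMeasure_injective (MeasureTheory.OuterMeasure.ext fun A => ?_)
  have hcard : (s.image f).card = s.card := Finset.card_image_of_injOn hf.injOn
  have hcard_filter : ((s.image f).filter (· ∈ A)).card = (s.filter (f · ∈ A)).card := by
    rw [Finset.filter_image]
    exact Finset.card_image_of_injOn (hf.injOn.mono (Finset.filter_subset _ s))
  simp only [PMF.toOuterMeasure_map_apply, PMF.toOuterMeasure_uniformOfFinset_apply,
    Set.mem_preimage, hcard, hcard_filter]

section Switching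

variable {V : Type*} {k : ℕ} {G : SimpleGraph V} {v x y : V} {σ : V → Fin k} {q : Fin k}

theorem self_mem_disagreeSet : v ∈ disagreeSet G v σ q :=
  ⟨.nil, by simp⟩

theorem eq_or_eq_of_mem_disagreeSet (hx : x ∈ disagreeSet G v σ q) : σ x = σ v ∨ σ x = q :=
  let ⟨p, hp⟩ := hx
  hp x p.end_mem_support

theorem mem_disagreeSet_of_adj (hx : x ∈ disagreeSet G v σ q) (hxy : G.Adj x y)
    (hy : σ y = σ v ∨ σ y = q) : y ∈ disagreeSet G v σ q := by
  obtain ⟨p, hp⟩ := hx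
  refine ⟨p.concat hxy, fun w hw => ?_⟩
  rw [SimpleGraph.Walk.support_concat, List.mem_append, List.mem_singleton] at hw
  obtain hw | rfl := hw
  exacts [hp w hw, hy]

theorem switchColour_of_mem (hx : x ∈ disagreeSet G v σ q) :
    switchColour G v σ q x = Equiv.swap (σ v) q (σ x) := by
  rw [switchColour, if_pos hx, Equiv.swap_apply_def]

theorem switchColour_of_notMem (hx : x ∉ disagreeSet G v σ q) :
    switchColour G v σ q x = σ x :=
  if_neg hx

theorem switchColour_self : switchColour G v σ q v = q := by
  rw [switchColour_of_mem self_mem_disagreeSet, Equiv.swap_apply_left]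

theorem switchColour_eq_or_eq_iff :
    (switchColour G v σ q x = q ∨ switchColour G v σ q x = σ v) ↔ (σ x = σ v ∨ σ x = q) := by
  by_cases hx : x ∈ disagreeSet G v σ q
  · rw [switchColour_of_mem hx, Equiv.swap_apply_eq_iff, Equiv.swap_apply_eq_iff,
      Equiv.swap_apply_right, Equiv.swap_apply_left]
  · rw [switchColour_of_notMem hx, or_comm]

theorem disagreeSet_switchColour :
    disagreeSet G v (switchColour G v σ q) (σ v) = disagreeSet G v σ q := by
  simp only [disagreeSet, switchColour_self, switchColour_eq_or_eq_iff]

theorem switchColour_switchColour : switchColour G v (switchColour G v σ q) (σ v) = σ := by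
  funext x
  by_cases hx : x ∈ disagreeSet G v σ q
  · have hx' : x ∈ disagreeSet G v (switchColour G v σ q) (σ v) := by
      rwa [disagreeSet_switchColour]
    rw [switchColour_of_mem hx', switchColour_self, switchColour_of_mem hx, Equiv.swap_comm,
      Equiv.swap_apply_self]
  · have hx' : x ∉ disagreeSet G v (switchColour G v σ q) (σ v) := by
      rwa [disagreeSet_switchColour]
    rw [switchColour_of_notMem hx', switchColour_of_notMem hx]

theorem switchColour_ne_of_mem_of_notMem (hx : x ∈ disagreeSet G v σ q)
    (hy : y ∉ disagreeSet G v σ q) (hxy : G.Adj x y) :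
    switchColour G v σ q x ≠ switchColour G v σ q y := by
  intro h
  have hx_pair : switchColour G v σ q x = q ∨ switchColour G v σ q x = σ v :=
    switchColour_eq_or_eq_iff.mpr (eq_or_eq_of_mem_disagreeSet hx)
  rw [h, switchColour_eq_or_eq_iff] at hx_pair
  exact hy (mem_disagreeSet_of_adj hx hxy hx_pair)

theorem switchColour_ne_of_adj (hσ : σ x ≠ σ y) (hxy : G.Adj x y) :
    switchColour G v σ q x ≠ switchColour G v σ q y := by
  by_cases hx : x ∈ disagreeSet G v σ q <;> by_cases hy : y ∈ disagreeSet G v σ q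
  · rw [switchColour_of_mem hx, switchColour_of_mem hy]
    exact (Equiv.injective _).ne hσ
  · exact switchColour_ne_of_mem_of_notMem hx hy hxy
  · exact (switchColour_ne_of_mem_of_notMem hy hx hxy.symm).symm
  · rwa [switchColour_of_notMem hx, switchColour_of_notMem hy]

end Switching

section SeparatedColourings

variable {V : Type*} {k : ℕ}

/-- The proper colourings `σ` with `σ v = a` and `σ u = b` whose disagreement graph `Q_{a,d}` does
not contain `u`. The paper's `S(c,c)` is the case `(a, b, d) = (c, c, q)` and its `S(q,c)` the case
`(a, b, d) = (q, c, c)`, so that switching exchanges `a` and `d`. -/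
def separatedColourings (G : SimpleGraph V) (v u : V) (a b d : Fin k) : Set (V → Fin k) :=
  {σ | (∀ x y, G.Adj x y → σ x ≠ σ y) ∧ σ v = a ∧ σ u = b ∧ u ∉ disagreeSet G v σ d}

theorem coe_SccF [Fintype V] (G : SimpleGraph V) (v u : V) (c q : Fin k) :
    (SccF G v u c q : Set (V → Fin k)) = separatedColourings G v u c c q :=
  Set.Finite.coe_toFinset _

theorem coe_SqcF [Fintype V] (G : SimpleGraph V) (v u : V) (c q : Fin k) :
    (SqcF G v u c q : Set (V → Fin k)) = separatedColourings G v u q c c :=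
  Set.Finite.coe_toFinset _

variable (G : SimpleGraph V) (v u : V) (a b d : Fin k)

theorem mapsTo_switchColour :
    Set.MapsTo (switchColour G v · d) (separatedColourings G v u a b d)
      (separatedColourings G v u d b a) := by
  rintro σ ⟨hσ, rfl, hu, hsep⟩
  refine ⟨fun x y hxy => switchColour_ne_of_adj (hσ x y hxy) hxy, switchColour_self,
    (switchColour_of_notMem hsep).trans hu, ?_⟩
  rwa [disagreeSet_switchColour]

theorem leftInvOn_switchColour :
    Set.LeftInvOn (switchColour G v · a) (switchColour G v · d)
      (separatedColourings G v u a b d) := by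
  rintro σ ⟨-, rfl, -, -⟩
  exact switchColour_switchColour

theorem bijOn_switchColour :
    Set.BijOn (switchColour G v · d) (separatedColourings G v u a b d)
      (separatedColourings G v u d b a) :=
  Set.InvOn.bijOn ⟨leftInvOn_switchColour G v u a b d, leftInvOn_switchColour G v u d b a⟩
    (mapsTo_switchColour G v u a b d) (mapsTo_switchColour G v u d b a)

end SeparatedColourings

/-- for distinct colours `c q` with `S(c,c)` nonempty, if `X` is uniform
on `S(c,c)` then `H(X,q)` is uniform on `S(q,c)`. -/
theorem stmt3 {V : Type*} [Fintype V] {k : ℕ} (hk : 0 < k)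
    (G : SimpleGraph V) (v u : V) (huv : u ≠ v) (hadj : ¬ G.Adj v u)
    (c q : Fin k) (hcq : c ≠ q) (hne : (SccF G v u c q).Nonempty) :
    ∃ hne' : (SqcF G v u c q).Nonempty,
      PMF.map (fun σ => switchColour G v σ q) (PMF.uniformOfFinset (SccF G v u c q) hne)
        = PMF.uniformOfFinset (SqcF G v u c q) hne' := by
  have hbij : Set.BijOn (switchColour G v · q) (SccF G v u c q) (SqcF G v u c q) := by
    rw [coe_SccF, coe_SqcF]
    exact bijOn_switchColour G v u c c q
  have hne' : (SqcF G v u c q).Nonempty := by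
    exact_mod_cast hbij.mapsTo.nonempty hne
  exact ⟨hne', map_uniformOfFinset_of_bijOn hbij hne hne'⟩
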